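/- For every integer n ≥ 1, the constant coefficient in x of f^n_{x,y}(x) ∈ ℤ[x,y] (i.e., the coefficient a_{3^n}(y) when f^n_{x,y}(x) is written as Σ_{k=0}^{3^n} a_k(y) x^{3^n-k}) is a monic polynomial in y of degree 3^{n-1}. -/

import Mathlib

/-!
Setting `x = 0` turns `f_{x,y}(z)` into `z^3 + y`, so the constant coefficient `c_n(y)` of
`f^n_{x,y}(x)` satisfies `c_0 = 0` and `c_{n+1} = c_n^3 + y` (`coeff_zero_fnx_succ`). Thus
`c_1 = y`, and if `c_n` is monic of degree `3^(n-1)` then `c_n^3` is monic of degree `3^n > 1`,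
which adding `y` does not disturb.
-/

noncomputable section

/-- The polynomial ring ℤ[y]. -/
abbrev Ry : Type := Polynomial ℤ

/-- The polynomial ring ℤ[x,y] = (ℤ[y])[x], with `x` the outer variable. -/
abbrev Rxy : Type := Polynomial Ry

/-- The element `x ∈ ℤ[x,y]`. -/
def xP : Rxy := Polynomial.X

/-- The element `y ∈ ℤ[x,y]`. -/
def yP : Rxy := Polynomial.C Polynomial.X

/-- `f_{x,y}(z) = z^3 - 3x^2 z + y`, as a polynomial in `z` with coefficients in `ℤ[x,y]`. -/
def fxy : Polynomial Rxy :=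
  Polynomial.X ^ 3 - Polynomial.C (3 * xP ^ 2) * Polynomial.X + Polynomial.C yP

/-- The `n`-th iterate `f^n_{x,y}(z)` (in the variable `z`). -/
def fIter : ℕ → Polynomial Rxy
  | 0 => Polynomial.X
  | n + 1 => fxy.comp (fIter n)

/-- `f^n_{x,y}(x)`, the `n`-th iterate evaluated at `z = x`, an element of `ℤ[x,y]`. -/
def fnx (n : ℕ) : Rxy := (fIter n).eval xP

/-- The coefficient `a_k(y) ∈ ℤ[y]` of `x^(3^n - k)` in `f^n_{x,y}(x)`. -/
def a (n k : ℕ) : Ry := (fnx n).coeff (3 ^ n - k)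

theorem fnx_succ (n : ℕ) :
    fnx (n + 1) = fnx n ^ 3 - 3 * xP ^ 2 * fnx n + yP := by
  simp [fnx, fIter, fxy]

theorem coeff_zero_fnx_zero : (fnx 0).coeff 0 = 0 := by
  simp [fnx, fIter, xP]

theorem coeff_zero_fnx_succ (n : ℕ) :
    (fnx (n + 1)).coeff 0 = (fnx n).coeff 0 ^ 3 + Polynomial.X := by
  simp [fnx_succ, Polynomial.coeff_zero_eq_eval_zero, xP, yP]

theorem coeff_zero_fnx_monic (n : ℕ) :
    ((fnx (n + 1)).coeff 0).Monic ∧ ((fnx (n + 1)).coeff 0).natDegree = 3 ^ n := by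
  induction n with
  | zero =>
    rw [coeff_zero_fnx_succ, coeff_zero_fnx_zero]
    simp [Polynomial.monic_X]
  | succ n ih =>
    obtain ⟨hm, hd⟩ := ih
    rw [coeff_zero_fnx_succ]
    have hdeg : (((fnx (n + 1)).coeff 0) ^ 3).natDegree = 3 ^ (n + 1) := by
      rw [hm.natDegree_pow, hd, pow_succ, mul_comm]
    have hlt : (Polynomial.X : Ry).natDegree < (((fnx (n + 1)).coeff 0) ^ 3).natDegree := by
      rw [hdeg, Polynomial.natDegree_X]
      exact Nat.one_lt_pow (Nat.succ_ne_zero n) (by norm_num)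
    exact ⟨(hm.pow 3).add_of_left (Polynomial.degree_lt_degree hlt),
      (Polynomial.natDegree_add_eq_left_of_natDegree_lt hlt).trans hdeg⟩

/-- For `n ≥ 1`, the constant coefficient in `x` of `f^n_{x,y}(x)` (i.e. the coefficient
`a_{3^n}(y)`) is a monic polynomial in `y` of degree `3^(n-1)`. -/
theorem constant_x_coefficient_monic (n : ℕ) (hn : 1 ≤ n) :
    (a n (3 ^ n)).Monic ∧ (a n (3 ^ n)).natDegree = 3 ^ (n - 1) := by
  obtain ⟨m, rfl⟩ := Nat.exists_eq_add_of_le' hn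
  simpa [a] using coeff_zero_fnx_monic m
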